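/- Let n ≥ 2 and 0 < δ ≤ τ. In ℝⁿ, let F = {x : x₀ = 0}, c = δ·e₀, B = closedBall(c, τ), and π(x) = x − x₀·e₀. Then volume({x ∈ B : π(x) ∉ B}) > 0; that is, whenever the ball's center is at strictly positive distance δ from the fair hyperplane, the auditor detects a manipulating platform with strictly positive probability. -/

import Mathlib

open MeasureTheory Real

/-!
Let `P` be the orthogonal projection onto a subspace `U ≠ ⊥`, and let `c ∉ U`. For `u ∈ U`, the
projection of `c + u` is `P c + u`, at distance `√(‖u‖² + dist (P c) c ²)` from `c`. Choosing `‖u‖`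
just below the radius `τ` makes this exceed `τ` although `c + u` lies in the open ball; both
conditions are open, so they hold on a neighbourhood of `c + u`.
-/

section InnerProductSpace

variable {𝕜 E : Type*} [RCLike 𝕜] [NormedAddCommGroup E] [InnerProductSpace 𝕜 E]

section Projection

variable {U : Submodule 𝕜 E} [U.HasOrthogonalProjection]

lemma dist_sq_eq_dist_starProjection_sq_add {u : E} (hu : u ∈ U) (x : E) :
    dist u x ^ 2 = dist u (U.starProjection x) ^ 2 + dist (U.starProjection x) x ^ 2 := by
  have orthogonal : inner 𝕜 (u - U.starProjection x) (U.starProjection x - x) = 0 := by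
    rw [← neg_sub x, inner_neg_right, neg_eq_zero]
    exact U.inner_right_of_mem_orthogonal (U.sub_mem hu (U.starProjection_apply_mem x))
      (U.sub_starProjection_mem_orthogonal x)
  simpa only [dist_eq_norm, sub_add_sub_cancel, ← sq] using
    norm_add_sq_eq_norm_sq_add_norm_sq_of_inner_eq_zero _ _ orthogonal

lemma exists_mem_ball_starProjection_notMem_closedBall {c : E} {τ : ℝ} (hU : U ≠ ⊥) (hc : c ∉ U)
    (hτ : 0 < τ) : ∃ x ∈ Metric.ball c τ, U.starProjection x ∉ Metric.closedBall c τ := by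
  have dist_c_pos : 0 < dist (U.starProjection c) c :=
    dist_pos.2 fun h ↦ hc (U.starProjection_eq_self_iff.1 h)
  -- For a centre farther than `τ` from `U` the root takes its junk value `0`, which also serves.
  obtain ⟨s, sqrt_lt_s, s_lt⟩ : ∃ s, √(τ ^ 2 - dist (U.starProjection c) c ^ 2) < s ∧ s < τ :=
    exists_between ((sqrt_lt' hτ).2 (sub_lt_self _ (pow_pos dist_c_pos 2)))
  have : Nontrivial U := U.nontrivial_iff_ne_bot.2 hU
  let : NormedSpace ℝ U := .restrictScalars ℝ 𝕜 U
  obtain ⟨u, norm_u⟩ : ∃ u : U, ‖(u : E)‖ = s :=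
    exists_norm_eq U ((sqrt_nonneg _).trans sqrt_lt_s.le)
  refine ⟨c + u, by simpa [norm_u] using s_lt, ?_⟩
  have dist_sq :
      dist (U.starProjection (c + u)) c ^ 2 = s ^ 2 + dist (U.starProjection c) c ^ 2 := by
    rw [dist_sq_eq_dist_starProjection_sq_add (U.starProjection_apply_mem _) c, map_add,
      U.starProjection_eq_self_iff.2 u.2, dist_self_add_left, norm_u]
  rw [Metric.mem_closedBall, not_le]
  refine lt_of_pow_lt_pow_left₀ 2 dist_nonneg ?_
  rw [dist_sq]
  exact sub_lt_iff_lt_add.1 (lt_sq_of_sqrt_lt sqrt_lt_s)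

theorem detection_rate_pos_general [MeasurableSpace E] (μ : Measure E) [μ.IsOpenPosMeasure]
    {c : E} {τ : ℝ} (hU : U ≠ ⊥) (hc : c ∉ U) (hτ : 0 < τ) :
    0 < μ {x ∈ Metric.closedBall c τ | U.starProjection x ∉ Metric.closedBall c τ} := by
  obtain ⟨x, hx, hUx⟩ := exists_mem_ball_starProjection_notMem_closedBall hU hc hτ
  exact Measure.measure_pos_of_mem_nhds μ <|
    Filter.inter_mem (Metric.closedBall_mem_nhds_of_mem hx) <|
      U.starProjection.continuous.continuousAt <|
        Metric.isClosed_closedBall.isOpen_compl.mem_nhds hUx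

end Projection

lemma orthogonal_span_singleton_ne_bot (h : 1 < Module.finrank 𝕜 E) (v : E) :
    (Submodule.span 𝕜 {v})ᗮ ≠ ⊥ := by
  rw [ne_eq, Submodule.orthogonal_eq_bot_iff]
  intro span_eq_top
  have finrank_le : Module.finrank 𝕜 (Submodule.span 𝕜 {v}) ≤ 1 := by
    simpa using finrank_span_le_card (R := 𝕜) {v}
  rw [span_eq_top, finrank_top] at finrank_le
  exact h.not_ge finrank_le

lemma smul_notMem_orthogonal_span_singleton {a : 𝕜} {v : E} (ha : a ≠ 0) (hv : v ≠ 0) :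
    a • v ∉ (Submodule.span 𝕜 {v})ᗮ := by
  rw [Submodule.mem_orthogonal_singleton_iff_inner_right, inner_smul_right]
  exact mul_ne_zero ha (inner_self_ne_zero.2 hv)

end InnerProductSpace

lemma starProjection_orthogonal_span_single {𝕜 ι : Type*} [RCLike 𝕜] [Fintype ι] [DecidableEq ι]
    (i : ι) (x : EuclideanSpace 𝕜 ι) :
    (Submodule.span 𝕜 {EuclideanSpace.single i (1 : 𝕜)})ᗮ.starProjection x =
      x - x i • EuclideanSpace.single i 1 := by
  rw [Submodule.starProjection_orthogonal_val, Submodule.starProjection_unit_singleton 𝕜 (by simp),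
    EuclideanSpace.inner_single_left, map_one, one_mul]

/-- Strictly positive detection probability: for `n ≥ 2` and `0 < δ ≤ τ`, with
`c = δ·e₀`, `B = closedBall(c, τ)` and `π(x) = x − x₀·e₀`, the detection region
`{x ∈ B : π(x) ∉ B}` has strictly positive volume. -/
theorem detection_rate_pos {n : ℕ} (hn : 2 ≤ n) (δ τ : ℝ) (hδ : 0 < δ) (hδτ : δ ≤ τ) :
    let e₀ : EuclideanSpace ℝ (Fin n) := EuclideanSpace.single ⟨0, Nat.lt_of_lt_of_le Nat.zero_lt_two hn⟩ 1
    let c : EuclideanSpace ℝ (Fin n) := δ • e₀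
    let B : Set (EuclideanSpace ℝ (Fin n)) := Metric.closedBall c τ
    let proj : EuclideanSpace ℝ (Fin n) → EuclideanSpace ℝ (Fin n) :=
      fun x => x - x ⟨0, Nat.lt_of_lt_of_le Nat.zero_lt_two hn⟩ • e₀
    0 < volume {x ∈ B | proj x ∉ B} := by
  intro e₀
  simpa only [e₀, starProjection_orthogonal_span_single] using detection_rate_pos_general volume
    (orthogonal_span_singleton_ne_bot (𝕜 := ℝ) (by rwa [finrank_euclideanSpace_fin]) e₀)
    (smul_notMem_orthogonal_span_singleton hδ.ne' (by simp [e₀])) (hδ.trans_le hδτ)
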